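/- arXiv:0809.1643 — 2 statements merged into one kernel-verified Lean document; each statement's English description precedes it below -/
import Mathlib

section
/- Let p < q be reals, let 1 ≤ r ≤ n be integers, let f be (n+1)-times continuously differentiable on [p,q], and let x, x_0, …, x_n be pairwise distinct points of [p,q]. Then there exists ξ in the smallest closed interval containing x, x_0, …, x_n such that f[x, x_0, …, x_{r−1}] = D_{r,r+1,…,n}[x] + (f^{(n+1)}(ξ)/(n+1)!)·∏_{i=r}^{n}(x − x_i). -/
/-- Divided difference `f[y i, y (i+1), …, y j]` defined by the standard recursion
`f[y_i,…,y_j] = (f[y_{i+1},…,y_j] − f[y_i,…,y_{j−1}])/(y_j − y_i)`. -/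
noncomputable def divDiff (f : ℝ → ℝ) (y : ℕ → ℝ) (i j : ℕ) : ℝ :=
  if _h : j ≤ i then f (y i)
  else (divDiff f y (i + 1) j - divDiff f y i (j - 1)) / (y j - y i)
termination_by j - i
decreasing_by all_goals omega

/-- Neville iteration: `neville xs x g i j` is the iterate built from the initial
values `g j` (at node `xs j`) over the nodes `xs j, …, xs (j+i)`. -/
noncomputable def neville (xs : ℕ → ℝ) (x : ℝ) (g : ℕ → ℝ) : ℕ → ℕ → ℝ
  | 0, j => g j
  | i + 1, j =>
      ((xs (i + 1 + j) - x) * neville xs x g i j - (xs j - x) * neville xs x g i (j + 1)) /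
        (xs (i + 1 + j) - xs j)

/-- Aitken iteration with base index `r`: `aitken xs x g r i j` is the iterate
`d_{r,r+1,…,i,j}` (for `r ≤ i < j`) built from the initial values `g j` at the nodes `xs j`. -/
noncomputable def aitken (xs : ℕ → ℝ) (x : ℝ) (g : ℕ → ℝ) (r : ℕ) (i j : ℕ) : ℝ :=
  if _h : i ≤ r then ((xs j - x) * g r - (xs r - x) * g j) / (xs j - xs r)
  else ((xs j - x) * aitken xs x g r (i - 1) i - (xs i - x) * aitken xs x g r (i - 1) j) /
        (xs j - xs i)
termination_by i
decreasing_by all_goals omega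

/-- The full Aitken iterate `d_{r,r+1,…,n}` (equal to the initial value when `n = r`). -/
noncomputable def aitkenLast (xs : ℕ → ℝ) (x : ℝ) (g : ℕ → ℝ) (r n : ℕ) : ℝ :=
  if n ≤ r then g n else aitken xs x g r (n - 1) n

/-- Confluent divided difference `g[x,…,x (m times), xi]`, defined using
`g[x,…,x (m times)] = g^{(m−1)}(x)/(m−1)!` and `g[xi] = g xi`. -/
noncomputable def confDD (g : ℝ → ℝ) (x xi : ℝ) : ℕ → ℝ
  | 0 => g xi
  | m + 1 => (confDD g x xi m - iteratedDeriv m g x / (Nat.factorial m : ℝ)) / (xi - x)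

/-!
Both sides are pieces of Lagrange interpolation polynomials. With `L_s` the interpolant of `f` and
`N_s` the nodal polynomial at the nodes indexed by `s`, Newton's identity
`f[t, x₀, …, x_{r-1}] · N_{<r}(t) = f(t) - L_{<r}(t)` shows that `L_{≤n} = L_{<r} + N_{<r} · Q`,
where `Q` interpolates `t ↦ f[t, x₀, …, x_{r-1}]` at `x_r, …, x_n`; Neville's scheme evaluates `Q`
at `x`. Hence `N_{<r}(x)` times the required difference is the interpolation error
`f(x) - L_{≤n}(x)`, to which Cauchy's remainder formula applies, and `N_{<r}(x) ≠ 0` cancels.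
-/

open Finset Lagrange Polynomial

section LagrangeInterpolation

theorem coeff_card_nodal {R ι : Type*} [CommRing R] (s : Finset ι) (v : ι → R) :
    (nodal s v).coeff #s = 1 := by
  nontriviality R
  simpa only [natDegree_nodal] using (nodal_monic (s := s) (v := v)).coeff_natDegree

variable {F ι : Type*} [Field F] [DecidableEq ι] {s t : Finset ι} {v r g : ι → F} {i j : ι}

theorem coeff_interpolate_eq_zero (hvs : Set.InjOn v s) {m : ℕ} (hm : #s ≤ m) :
    (interpolate s v r).coeff m = 0 :=
  coeff_eq_zero_of_degree_lt <|
    (degree_interpolate_lt r hvs).trans_le (by exact_mod_cast hm)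

theorem C_sub_mul_interpolate (hvs : Set.InjOn v s) (hi : i ∈ s) (hj : j ∈ s) (hij : i ≠ j) :
    C (v j - v i) * interpolate s v r =
      (C (v j) - X) * interpolate (s.erase j) v r -
        (C (v i) - X) * interpolate (s.erase i) v r := by
  have hji : v j - v i ≠ 0 := sub_ne_zero.2 (hvs.ne hj hi hij.symm)
  have hC : C (v j - v i) * C (v j - v i)⁻¹ = 1 := by rw [← C_mul, mul_inv_cancel₀ hji, C_1]
  rw [interpolate_eq_add_interpolate_erase r hvs hi hj hij, basisDivisor, basisDivisor,
    ← neg_sub (v j) (v i), inv_neg, C_neg]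
  linear_combination ((C (v j) - X) * interpolate (s.erase j) v r -
    (C (v i) - X) * interpolate (s.erase i) v r) * hC

theorem eval_interpolate_eq_div (hvs : Set.InjOn v s) (hi : i ∈ s) (hj : j ∈ s) (hij : i ≠ j)
    (x : F) :
    (interpolate s v r).eval x =
      ((v j - x) * (interpolate (s.erase j) v r).eval x -
        (v i - x) * (interpolate (s.erase i) v r).eval x) / (v j - v i) := by
  rw [eq_div_iff (sub_ne_zero.2 (hvs.ne hj hi hij.symm)), mul_comm]
  simpa only [eval_mul, eval_sub, eval_C, eval_X] using
    congrArg (eval x) (C_sub_mul_interpolate (r := r) hvs hi hj hij)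

theorem coeff_interpolate_eq_div (hvs : Set.InjOn v s) (hi : i ∈ s) (hj : j ∈ s) (hij : i ≠ j)
    {m : ℕ} (hm : #s ≤ m + 2) :
    (interpolate s v r).coeff (m + 1) =
      ((interpolate (s.erase i) v r).coeff m - (interpolate (s.erase j) v r).coeff m) /
        (v j - v i) := by
  have top_eq_zero {k : ι} (hk : k ∈ s) : (interpolate (s.erase k) v r).coeff (m + 1) = 0 :=
    coeff_interpolate_eq_zero (hvs.mono (coe_subset.2 (erase_subset k s)))
      (by rw [card_erase_of_mem hk]; omega)
  have h := congrArg (coeff · (m + 1)) (C_sub_mul_interpolate (r := r) hvs hi hj hij)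
  simp only [coeff_C_mul, sub_mul, coeff_sub, coeff_X_mul, top_eq_zero hi, top_eq_zero hj] at h
  rw [eq_div_iff (sub_ne_zero.2 (hvs.ne hj hi hij.symm))]
  linear_combination h

theorem interpolate_union (hvst : Set.InjOn v (s ∪ t : Finset ι)) (hst : Disjoint s t)
    (hg : ∀ i ∈ t, g i * (nodal s v).eval (v i) = r i - (interpolate s v r).eval (v i)) :
    interpolate (s ∪ t) v r = interpolate s v r + nodal s v * interpolate t v g := by
  have hvs : Set.InjOn v s := hvst.mono (coe_subset.2 subset_union_left)
  have hvt : Set.InjOn v t := hvst.mono (coe_subset.2 subset_union_right)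
  have hcard : #(s ∪ t) = #s + #t := card_union_of_disjoint hst
  symm
  apply eq_interpolate_of_eval_eq r hvst
  · rw [hcard]
    refine (degree_add_le _ _).trans_lt (max_lt ?_ ?_)
    · exact (degree_interpolate_lt r hvs).trans_le (by exact_mod_cast Nat.le_add_right _ _)
    · rw [degree_mul, degree_nodal, Nat.cast_add]
      exact WithBot.add_lt_add_left (WithBot.natCast_ne_bot _) (degree_interpolate_lt g hvt)
  · intro i hi
    rw [eval_add, eval_mul]
    rcases mem_union.1 hi with his | hit
    · rw [eval_interpolate_at_node r hvs his, eval_nodal_at_node his, zero_mul, add_zero]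
    · rw [eval_interpolate_at_node g hvt hit, mul_comm, hg i hit, add_sub_cancel]

theorem coeff_card_interpolate_insert_mul_eval_nodal
    (hvs : Set.InjOn v (insert i s : Finset ι)) (hi : i ∉ s) :
    (interpolate (insert i s) v r).coeff #s * (nodal s v).eval (v i) =
      r i - (interpolate s v r).eval (v i) := by
  have hnodal : (nodal s v).eval (v i) ≠ 0 :=
    eval_nodal_not_at_node fun k hk ↦
      hvs.ne (mem_insert_self i s) (mem_insert_of_mem hk) (ne_of_mem_of_not_mem hk hi).symm
  set c := (r i - (interpolate s v r).eval (v i)) / (nodal s v).eval (v i) with hc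
  have hinsert : interpolate (insert i s) v r = interpolate s v r + nodal s v * C c := by
    rw [insert_eq, union_comm, ← interpolate_singleton (fun _ ↦ c) (i := i) (v := v)]
    refine interpolate_union (by rwa [union_comm, ← insert_eq]) (disjoint_singleton_right.2 hi) ?_
    intro k hk
    rw [mem_singleton.1 hk, hc, div_mul_cancel₀ _ hnodal]
  have hcoeff : (interpolate (insert i s) v r).coeff #s = c := by
    rw [hinsert, coeff_add, coeff_mul_C, coeff_card_nodal, one_mul,
      coeff_interpolate_eq_zero (hvs.mono (coe_subset.2 (subset_insert i s))) le_rfl, zero_add]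
  rw [hcoeff, hc, div_mul_cancel₀ _ hnodal]

theorem interpolate_map {κ : Type*} [DecidableEq κ] (s : Finset κ) (e : κ ↪ ι) :
    interpolate (s.map e) v r = interpolate s (v ∘ e) (r ∘ e) := by
  simp only [interpolate_apply, Lagrange.basis, sum_map, ← map_erase, prod_map,
    Function.comp_apply]

end LagrangeInterpolation

section CauchyRemainder

variable {D : Set ℝ} {f : ℝ → ℝ}

theorem exists_finset_derivWithin_eq_zero (hD : Convex ℝ D) (hf : ContinuousOn f D)
    {Z : Finset ℝ} (hZD : (Z : Set ℝ) ⊆ D) (hZ : ∀ z ∈ Z, f z = 0) :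
    ∃ T : Finset ℝ, #Z ≤ #T + 1 ∧ (T : Set ℝ) ⊆ convexHull ℝ (Z : Set ℝ) ∧
      ∀ t ∈ T, derivWithin f D t = 0 := by
  have rolle (a b : ℝ) (ha : a ∈ Z) (hb : b ∈ Z) (hab : a < b) :
      ∃ c ∈ Set.Ioo a b, derivWithin f D c = 0 := by
    have habD : Set.Icc a b ⊆ D := hD.ordConnected.out (hZD ha) (hZD hb)
    obtain ⟨c, hc, hc0⟩ :=
      exists_deriv_eq_zero hab (hf.mono habD) ((hZ a ha).trans (hZ b hb).symm)
    have hcD : D ∈ nhds c := Filter.mem_of_superset (Icc_mem_nhds hc.1 hc.2) habD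
    exact ⟨c, hc, by rw [derivWithin_of_mem_nhds hcD, hc0]⟩
  choose! c hc hc0 using rolle
  refine ⟨{ab ∈ Z ×ˢ Z | ab.1 < ab.2}.image fun ab ↦ c ab.1 ab.2, ?_, ?_, ?_⟩
  · refine card_le_of_interleaved fun a ha b hb hab _ ↦ ⟨c a b, ?_, hc a b ha hb hab⟩
    exact mem_image.2 ⟨(a, b), mem_filter.2 ⟨mem_product.2 ⟨ha, hb⟩, hab⟩, rfl⟩
  · simp only [Set.subset_def, mem_coe, forall_mem_image, mem_filter, mem_product, and_imp,
      Prod.forall]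
    intro a b ha hb hab
    exact (convex_convexHull ℝ _).ordConnected.out (subset_convexHull ℝ _ ha)
      (subset_convexHull ℝ _ hb) (Set.Ioo_subset_Icc_self (hc a b ha hb hab))
  · simp only [forall_mem_image, mem_filter, mem_product, and_imp, Prod.forall]
    exact hc0

theorem exists_iteratedDerivWithin_eq_zero (hD : Convex ℝ D) (hD' : UniqueDiffOn ℝ D) {k : ℕ}
    (hf : ContDiffOn ℝ k f D) {Z : Finset ℝ} (hZD : (Z : Set ℝ) ⊆ D) (hk : k < #Z)
    (hZ : ∀ z ∈ Z, f z = 0) :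
    ∃ ξ ∈ convexHull ℝ (Z : Set ℝ), iteratedDerivWithin k f D ξ = 0 := by
  induction k generalizing f Z with
  | zero =>
    obtain ⟨z, hz⟩ := card_pos.1 hk
    exact ⟨z, subset_convexHull ℝ _ hz, by rw [iteratedDerivWithin_zero, hZ z hz]⟩
  | succ k ih =>
    obtain ⟨T, hcard, hTZ, hT⟩ := exists_finset_derivWithin_eq_zero hD hf.continuousOn hZD hZ
    obtain ⟨ξ, hξ, hξ0⟩ := ih (hf.derivWithin hD' (by norm_cast))
      (hTZ.trans (convexHull_min hZD hD)) (by omega) hT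
    exact ⟨ξ, convexHull_min hTZ (convex_convexHull ℝ _) hξ, by rw [iteratedDerivWithin_succ', hξ0]⟩

theorem iterate_derivative_eq_C_of_natDegree_le {R : Type*} [CommSemiring R] {P : R[X]} {k : ℕ}
    (hP : P.natDegree ≤ k) : derivative^[k] P = C (k.factorial * P.coeff k) := by
  have hdeg : (derivative^[k] P).natDegree = 0 :=
    Nat.eq_zero_of_le_zero ((natDegree_iterate_derivative P k).trans (by omega))
  rw [eq_C_of_natDegree_eq_zero hdeg, coeff_iterate_derivative, zero_add, Nat.descFactorial_self,
    nsmul_eq_mul]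

theorem iteratedDerivWithin_polynomial_eval {𝕜 : Type*} [NontriviallyNormedField 𝕜] {s : Set 𝕜}
    (hs : UniqueDiffOn 𝕜 s) (k : ℕ) (P : 𝕜[X]) {x : 𝕜} (hx : x ∈ s) :
    iteratedDerivWithin k (fun t ↦ P.eval t) s x = (derivative^[k] P).eval x := by
  induction k generalizing P with
  | zero => rw [iteratedDerivWithin_zero, Function.iterate_zero_apply]
  | succ k ih =>
    have hderiv : Set.EqOn (derivWithin (fun t ↦ P.eval t) s) (fun t ↦ P.derivative.eval t) s :=
      fun t ht ↦ P.derivWithin (hs t ht)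
    rw [iteratedDerivWithin_succ', iteratedDerivWithin_congr hderiv hx, ih,
      Function.iterate_succ_apply]

theorem exists_iteratedDerivWithin_eq_factorial_mul_coeff (hD : Convex ℝ D)
    (hD' : UniqueDiffOn ℝ D) {k : ℕ} (hf : ContDiffOn ℝ k f D) {P : ℝ[X]} (hP : P.natDegree ≤ k)
    {Z : Finset ℝ} (hZD : (Z : Set ℝ) ⊆ D) (hk : k < #Z) (hZ : ∀ z ∈ Z, f z = P.eval z) :
    ∃ ξ ∈ convexHull ℝ (Z : Set ℝ), iteratedDerivWithin k f D ξ = k.factorial * P.coeff k := by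
  have hPsmooth : ContDiff ℝ k fun t ↦ P.eval t := by simpa using P.contDiff_aeval (𝕜 := ℝ) k
  obtain ⟨ξ, hξ, hξ0⟩ := exists_iteratedDerivWithin_eq_zero (f := f - fun t ↦ P.eval t) hD hD'
    (hf.sub hPsmooth.contDiffOn) hZD hk fun z hz ↦ sub_eq_zero.2 (hZ z hz)
  have hξD : ξ ∈ D := convexHull_min hZD hD hξ
  refine ⟨ξ, hξ, ?_⟩
  rwa [iteratedDerivWithin_sub hξD hD' (hf ξ hξD) hPsmooth.contDiffAt.contDiffWithinAt,
    iteratedDerivWithin_polynomial_eval hD' k P hξD, iterate_derivative_eq_C_of_natDegree_le hP,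
    eval_C, sub_eq_zero] at hξ0

theorem exists_sub_eval_interpolate_eq {ι : Type*} [DecidableEq ι] {s : Finset ι} {v : ι → ℝ}
    (hD : Convex ℝ D) (hD' : UniqueDiffOn ℝ D) (hf : ContDiffOn ℝ #s f D)
    (hvs : Set.InjOn v s) (hvD : ∀ i ∈ s, v i ∈ D) {x : ℝ} (hx : x ∈ D) :
    ∃ ξ ∈ convexHull ℝ (insert x (v '' s)),
      f x - (interpolate s v (f ∘ v)).eval x =
        iteratedDerivWithin #s f D ξ / (#s).factorial * (nodal s v).eval x := by
  set L := interpolate s v (f ∘ v)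
  have hL (i : ι) (hi : i ∈ s) : L.eval (v i) = f (v i) := eval_interpolate_at_node _ hvs hi
  by_cases hxs : x ∈ s.image v
  · obtain ⟨i, hi, rfl⟩ := mem_image.1 hxs
    refine ⟨v i, subset_convexHull ℝ _ (Set.mem_insert _ _), ?_⟩
    rw [hL i hi, eval_nodal_at_node hi, sub_self, mul_zero]
  have hnodal : (nodal s v).eval x ≠ 0 :=
    eval_nodal_not_at_node fun i hi h ↦ hxs (mem_image.2 ⟨i, hi, h.symm⟩)
  -- The multiple of the nodal polynomial is chosen so that the new interpolant also agrees at `x`.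
  set c := (f x - L.eval x) / (nodal s v).eval x with hc
  set P := L + C c * nodal s v with hP
  have hPdeg : P.natDegree ≤ #s :=
    natDegree_add_le_of_degree_le (natDegree_le_of_degree_le (degree_interpolate_lt _ hvs).le)
      ((natDegree_C_mul_le _ _).trans natDegree_nodal.le)
  have hPcoeff : P.coeff #s = c := by
    rw [hP, coeff_add, coeff_C_mul, coeff_card_nodal, mul_one,
      coeff_interpolate_eq_zero hvs le_rfl, zero_add]
  have hPeval : ∀ z ∈ insert x (s.image v), f z = P.eval z := by
    simp only [hP, forall_mem_insert, forall_mem_image, eval_add, eval_mul, eval_C]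
    refine ⟨by rw [hc, div_mul_cancel₀ _ hnodal, add_sub_cancel], fun i hi ↦ ?_⟩
    rw [hL i hi, eval_nodal_at_node hi, mul_zero, add_zero]
  obtain ⟨ξ, hξ, hξP⟩ := exists_iteratedDerivWithin_eq_factorial_mul_coeff hD hD' hf hPdeg
    (Z := insert x (s.image v))
    (by simpa [Set.insert_subset_iff, Set.subset_def] using ⟨hx, hvD⟩)
    (by rw [card_insert_of_notMem hxs, card_image_of_injOn hvs]; exact Nat.lt_succ_self _) hPeval
  refine ⟨ξ, by simpa using hξ, ?_⟩
  rw [hξP, hPcoeff, mul_div_cancel_left₀ _ (by positivity), hc, div_mul_cancel₀ _ hnodal]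

end CauchyRemainder

theorem divDiff_eq_coeff_interpolate (f : ℝ → ℝ) {y : ℕ → ℝ} {i j : ℕ} (hij : i ≤ j)
    (hy : Set.InjOn y (Icc i j : Finset ℕ)) :
    divDiff f y i j = (interpolate (Icc i j) y (f ∘ y)).coeff (j - i) := by
  induction i, j using divDiff.induct with
  | case1 i j hji =>
    obtain rfl : i = j := le_antisymm hij hji
    rw [divDiff, dif_pos le_rfl, Icc_self, interpolate_singleton, Nat.sub_self, coeff_C_zero,
      Function.comp_apply]
  | case2 i j hji ih_left ih_right =>
    obtain ⟨k, rfl⟩ : ∃ k, j = i + k + 1 := ⟨j - i - 1, by omega⟩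
    rw [Nat.add_sub_cancel] at ih_right
    rw [divDiff, dif_neg hji, Nat.add_sub_cancel,
      ih_left (by omega) (hy.mono (coe_subset.2 (Icc_subset_Icc_left i.le_succ))),
      ih_right (by omega) (hy.mono (coe_subset.2 (Icc_subset_Icc_right (Nat.le_succ _)))),
      show i + k + 1 - i = k + 1 by omega, show i + k + 1 - (i + 1) = k by omega,
      show i + k - i = k by omega,
      coeff_interpolate_eq_div hy (left_mem_Icc.2 hij) (right_mem_Icc.2 hij) (by omega)
        (by rw [Nat.card_Icc]; omega),
      Icc_erase_left, Icc_erase_right, Icc_add_one_left_eq_Ioc, Ico_add_one_right_eq_Icc]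

theorem divDiff_mul_eval_nodal_Icc (f : ℝ → ℝ) {y : ℕ → ℝ} {i j : ℕ} (hij : i ≤ j)
    (hy : Set.InjOn y (Icc i j : Finset ℕ)) :
    divDiff f y i j * (nodal (Icc (i + 1) j) y).eval (y i) =
      f (y i) - (interpolate (Icc (i + 1) j) y (f ∘ y)).eval (y i) := by
  have hinsert : insert i (Icc (i + 1) j) = Icc i j := insert_Icc_add_one_left_eq_Icc hij
  have hcard : #(Icc (i + 1) j) = j - i := by rw [Nat.card_Icc]; omega
  rw [divDiff_eq_coeff_interpolate f hij hy, ← hcard, ← hinsert]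
  exact coeff_card_interpolate_insert_mul_eval_nodal (by rwa [hinsert]) (by simp)

theorem divDiff_cons_mul_eval_nodal (f : ℝ → ℝ) {X : ℕ → ℝ} {r : ℕ} {t : ℝ}
    (hX : Set.InjOn X (range r)) (ht : ∀ i < r, X i ≠ t) :
    divDiff f (fun i ↦ if i = 0 then t else X (i - 1)) 0 r * (nodal (range r) X).eval t =
      f t - (interpolate (range r) X (f ∘ X)).eval t := by
  set y : ℕ → ℝ := fun i ↦ if i = 0 then t else X (i - 1)
  have hyX : y ∘ addRightEmbedding 1 = X := rfl
  have hIcc : Icc (0 + 1) r = (range r).map (addRightEmbedding 1) := by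
    rw [range_eq_Ico, map_add_right_Ico, Ico_add_one_right_eq_Icc]
  have hy : Set.InjOn y (Icc 0 r : Finset ℕ) := by
    rw [← insert_Icc_add_one_left_eq_Icc r.zero_le, hIcc, coe_insert, Set.injOn_insert (by simp),
      coe_map, ← Set.image_comp, hyX]
    refine ⟨Set.InjOn.image_of_comp hX, ?_⟩
    rintro ⟨i, hi, hit⟩
    exact ht i (mem_range.1 hi) hit
  have h := divDiff_mul_eval_nodal_Icc f r.zero_le hy
  rw [hIcc, interpolate_map, nodal_eq, prod_map, Function.comp_assoc, hyX] at h
  exact h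

theorem range_union_Icc {r n : ℕ} (hrn : r ≤ n + 1) : range r ∪ Icc r n = Iic n := by
  ext i
  simp only [mem_union, mem_range, mem_Icc, mem_Iic]
  omega

theorem disjoint_range_Icc (r n : ℕ) : Disjoint (range r) (Icc r n) := by
  simp only [disjoint_left, mem_range, mem_Icc]
  omega

theorem nodal_Iic_eq_mul {R : Type*} [CommRing R] (X : ℕ → R) {r n : ℕ} (hrn : r ≤ n + 1) :
    nodal (Iic n) X = nodal (range r) X * nodal (Icc r n) X := by
  rw [← range_union_Icc hrn, nodal_eq, prod_union (disjoint_range_Icc r n), nodal_eq, nodal_eq]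

theorem interpolate_Iic_eq_add_nodal_mul (f : ℝ → ℝ) {X : ℕ → ℝ} {r n : ℕ} (hrn : r ≤ n + 1)
    (hX : Set.InjOn X (Iic n : Finset ℕ)) :
    interpolate (Iic n) X (f ∘ X) =
      interpolate (range r) X (f ∘ X) + nodal (range r) X * interpolate (Icc r n) X
        (fun j ↦ divDiff f (fun i ↦ if i = 0 then X j else X (i - 1)) 0 r) := by
  rw [← range_union_Icc hrn] at hX ⊢
  refine interpolate_union hX (disjoint_range_Icc r n) fun j hj ↦ ?_
  refine divDiff_cons_mul_eval_nodal f (hX.mono (coe_subset.2 subset_union_left)) fun i hi ↦ ?_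
  exact hX.ne (mem_union_left _ (mem_range.2 hi)) (mem_union_right _ hj)
    (hi.trans_le (mem_Icc.1 hj).1).ne

theorem neville_eq_eval_interpolate {X : ℕ → ℝ} (x : ℝ) (g : ℕ → ℝ) {i j : ℕ} (hij : i ≤ j)
    (hX : Set.InjOn X (Icc i j : Finset ℕ)) :
    neville X x g (j - i) i = (interpolate (Icc i j) X g).eval x := by
  obtain ⟨m, rfl⟩ := Nat.exists_eq_add_of_le hij
  rw [Nat.add_sub_cancel_left]
  induction m generalizing i with
  | zero => rw [neville, add_zero, Icc_self, interpolate_singleton, eval_C]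
  | succ m ih =>
    rw [neville, ih (by omega) (hX.mono (coe_subset.2 (Icc_subset_Icc_right (by omega)))),
      ih (by omega) (hX.mono (coe_subset.2 (Icc_subset_Icc (by omega) (by omega)))),
      eval_interpolate_eq_div hX (left_mem_Icc.2 hij) (right_mem_Icc.2 hij) (by omega),
      Icc_erase_left, Icc_erase_right, ← Icc_add_one_left_eq_Ioc, ← add_assoc i,
      Ico_add_one_right_eq_Icc, show m + 1 + i = i + m + 1 by omega,
      show i + 1 + m = i + m + 1 by omega]

theorem sub_eval_interpolate_Iic (f : ℝ → ℝ) {X : ℕ → ℝ} {r n : ℕ} (hrn : r ≤ n)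
    (hX : Set.InjOn X (Iic n : Finset ℕ)) {x : ℝ} (hx : ∀ i < r, X i ≠ x) :
    f x - (interpolate (Iic n) X (f ∘ X)).eval x =
      (divDiff f (fun i ↦ if i = 0 then x else X (i - 1)) 0 r -
        neville X x (fun j ↦ divDiff f (fun i ↦ if i = 0 then X j else X (i - 1)) 0 r) (n - r) r) *
          (nodal (range r) X).eval x := by
  have hrn' : r ≤ n + 1 := Nat.le_succ_of_le hrn
  have hX_union : Set.InjOn X (range r ∪ Icc r n : Finset ℕ) := by rwa [range_union_Icc hrn']
  have hX_range : Set.InjOn X (range r) := hX_union.mono (coe_subset.2 subset_union_left)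
  have hX_Icc : Set.InjOn X (Icc r n : Finset ℕ) :=
    hX_union.mono (coe_subset.2 subset_union_right)
  rw [interpolate_Iic_eq_add_nodal_mul f hrn' hX, eval_add, eval_mul,
    neville_eq_eval_interpolate x _ hrn hX_Icc]
  linear_combination -divDiff_cons_mul_eval_nodal f hX_range hx

theorem stmt_0_general {D : Set ℝ} (hD : Convex ℝ D) (hD' : UniqueDiffOn ℝ D) {r n : ℕ}
    (hrn : r ≤ n) {f : ℝ → ℝ} (hf : ContDiffOn ℝ (n + 1 : ℕ) f D) {x : ℝ} {X : ℕ → ℝ}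
    (hx : x ∈ D) (hX : ∀ i ≤ n, X i ∈ D) (hxX : ∀ i ≤ n, X i ≠ x)
    (hinj : Set.InjOn X (Set.Iic n)) :
    ∃ ξ ∈ convexHull ℝ (insert x (X '' Set.Iic n)),
      divDiff f (fun i ↦ if i = 0 then x else X (i - 1)) 0 r =
        neville X x (fun j ↦ divDiff f (fun i ↦ if i = 0 then X j else X (i - 1)) 0 r) (n - r) r +
          iteratedDerivWithin (n + 1) f D ξ / (n + 1).factorial * ∏ i ∈ Icc r n, (x - X i) := by
  rw [← coe_Iic] at hinj ⊢
  have hnodal : (nodal (range r) X).eval x ≠ 0 :=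
    eval_nodal_not_at_node fun i hi ↦ (hxX i ((mem_range.1 hi).le.trans hrn)).symm
  obtain ⟨ξ, hξ, hcauchy⟩ := exists_sub_eval_interpolate_eq hD hD' (by rwa [Nat.card_Iic]) hinj
    (fun i hi ↦ hX i (mem_Iic.1 hi)) hx
  rw [Nat.card_Iic, sub_eval_interpolate_Iic f hrn hinj fun i hi ↦ hxX i (hi.le.trans hrn),
    nodal_Iic_eq_mul X (Nat.le_succ_of_le hrn), eval_mul] at hcauchy
  refine ⟨ξ, hξ, mul_right_cancel₀ hnodal ?_⟩
  rw [← eval_nodal]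
  linear_combination hcauchy

theorem stmt_0 (p q : ℝ) (hpq : p < q) (r n : ℕ) (hr : 1 ≤ r) (hrn : r ≤ n)
    (f : ℝ → ℝ) (hf : ContDiffOn ℝ (n + 1 : ℕ) f (Set.Icc p q))
    (x : ℝ) (X : ℕ → ℝ)
    (hx : x ∈ Set.Icc p q) (hX : ∀ i ≤ n, X i ∈ Set.Icc p q)
    (hxX : ∀ i ≤ n, X i ≠ x)
    (hXX : ∀ i j, i ≤ n → j ≤ n → i ≠ j → X i ≠ X j) :
    ∃ ξ ∈ convexHull ℝ (insert x (X '' Set.Iic n)),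
      divDiff f (fun i => if i = 0 then x else X (i - 1)) 0 r
        = neville X x (fun j => divDiff f (fun i => if i = 0 then X j else X (i - 1)) 0 r) (n - r) r
          + iteratedDerivWithin (n + 1) f (Set.Icc p q) ξ / (Nat.factorial (n + 1) : ℝ)
            * ∏ i ∈ Finset.Icc r n, (x - X i) := by
  have hinj : Set.InjOn X (Set.Iic n) := fun i hi j hj ↦ not_imp_not.1 (hXX i j hi hj)
  exact stmt_0_general (convex_Icc p q) (uniqueDiffOn_Icc hpq) hrn hf hx hX hxX hinj
end

section
/- Let p < q be reals, let n ≥ 1 and k ≥ 0 be integers, let f be (n+k+1)-times continuously differentiable on [p,q], and let x, x_0, …, x_n be pairwise distinct points of [p,q]. Then there exists ξ in the smallest closed interval containing x, x_0, …, x_n such that Σ_{r=0}^{k} (f^{(k−r)}(x)/(k−r)!)·A_r(x) = Ã^{(k)}_{0,1,…,n}[x] + (f^{(n+k+1)}(ξ)/(n+k+1)!)·∏_{i=0}^{n}(x − x_i). -/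
/-!
On at least two nodes the Aitken iterate is the value at `x` of the Lagrange interpolant, so it is
linear in its initial values. Let `P` be the Hermite polynomial of degree at most `n + k + 1` which
agrees with `f` to order `k` at `x` and takes the values `f (X i)` at the nodes. Comparing
barycentric forms, the two sides of the formula without the remainder differ by `∏ i, (x - X i)`
times the coefficient of `P` in degree `n + k + 1`. Since `f - P` has a zero of multiplicity `k + 1`
at `x` and `n + 1` further zeros, Rolle's theorem shows that its derivative of order `n + k + 1`
vanishes somewhere, which identifies this coefficient as `f^{(n+k+1)}(ξ) / (n+k+1)!`.
-/

open Finset Polynomial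

section Aitken

variable {K ι : Type*} [Field K] [DecidableEq ι]

lemma eval_interpolate_insert_insert {s : Finset ι} {v : ι → K} {i j : ι} (hi : i ∉ s)
    (hj : j ∉ s) (hij : i ≠ j) (hv : Set.InjOn v (insert i (insert j s) : Finset ι))
    (g : ι → K) (x : K) :
    (Lagrange.interpolate (insert i (insert j s)) v g).eval x =
      ((v j - x) * (Lagrange.interpolate (insert i s) v g).eval x -
        (v i - x) * (Lagrange.interpolate (insert j s) v g).eval x) / (v j - v i) := by
  have hmem_i : i ∈ insert i (insert j s) := by simp
  have hmem_j : j ∈ insert i (insert j s) := by simp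
  have hvij : v i - v j ≠ 0 := sub_ne_zero.2 (hv.ne hmem_i hmem_j hij)
  have hvji : v j - v i ≠ 0 := sub_ne_zero.2 (hv.ne hmem_j hmem_i hij.symm)
  have erase_i : (insert i (insert j s)).erase i = insert j s := by grind
  have erase_j : (insert i (insert j s)).erase j = insert i s := by grind
  rw [Lagrange.interpolate_eq_add_interpolate_erase g hv hmem_i hmem_j hij, erase_i, erase_j]
  simp only [Lagrange.basisDivisor, eval_add, eval_mul, eval_sub, eval_C, eval_X]
  field_simp
  ring

lemma aitken_eq_eval_interpolate {X : ℕ → ℝ} (x : ℝ) (g : ℕ → ℝ) {r i : ℕ} (hri : r ≤ i) :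
    ∀ {j : ℕ}, i < j → Set.InjOn X (insert j (Icc r i) : Finset ℕ) →
      aitken X x g r i j = (Lagrange.interpolate (insert j (Icc r i)) X g).eval x := by
  induction i, hri using Nat.le_induction with
  | base =>
    intro j hrj hX
    have hnodes : insert j (Icc r r) = insert r (insert j ∅) := by grind
    rw [hnodes] at hX ⊢
    rw [eval_interpolate_insert_insert (notMem_empty r) (notMem_empty j) hrj.ne hX, aitken,
      dif_pos le_rfl]
    simp only [insert_empty_eq, Lagrange.interpolate_singleton, eval_C]
  | succ i hri ih =>
    intro j hij hX
    have hnodes : insert j (Icc r (i + 1)) = insert (i + 1) (insert j (Icc r i)) := by grind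
    rw [hnodes] at hX ⊢
    have hX_i : Set.InjOn X (insert (i + 1) (Icc r i) : Finset ℕ) :=
      hX.mono (coe_subset.2 (insert_subset_insert _ (subset_insert _ _)))
    have hX_j : Set.InjOn X (insert j (Icc r i) : Finset ℕ) :=
      hX.mono (coe_subset.2 (subset_insert _ _))
    rw [eval_interpolate_insert_insert (by simp) (by simp; lia) hij.ne hX, aitken,
      dif_neg (by lia), Nat.add_sub_cancel, ih i.lt_succ_self hX_i, ih (by lia) hX_j]

end Aitken

section Hermite

variable {K ι : Type*} [Field K]

/-- The polynomial `∑_{i ≤ k} c i (X - x) ^ i`; it is the Taylor polynomial at `x` of a function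
whose normalized derivatives `f^{(i)}(x) / i!` are the `c i`. -/
noncomputable def taylorPoly (c : ℕ → K) (k : ℕ) (x : K) : K[X] :=
  ∑ i ∈ range (k + 1), C (c i) * (X - C x) ^ i

lemma natDegree_taylorPoly_le (c : ℕ → K) (k : ℕ) (x : K) : (taylorPoly c k x).natDegree ≤ k := by
  refine natDegree_sum_le_of_forall_le _ _ fun i hi => (natDegree_C_mul_le _ _).trans ?_
  rw [natDegree_pow, natDegree_X_sub_C, mul_one]
  exact mem_range_succ_iff.1 hi

lemma eval_iterate_derivative_taylorPoly (c : ℕ → K) {k m : ℕ} (hm : m ≤ k) (x : K) :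
    (derivative^[m] (taylorPoly c k x)).eval x = m.factorial * c m := by
  simp only [taylorPoly, iterate_derivative_sum, iterate_derivative_C_mul,
    iterate_derivative_X_sub_pow, eval_finsetSum, eval_mul, eval_C, eval_smul, eval_pow, eval_sub,
    eval_X, sub_self]
  rw [sum_eq_single_of_mem m (mem_range_succ_iff.2 hm)]
  · simp [Nat.descFactorial_self, mul_comm]
  · intro i _ him
    rcases him.lt_or_gt with h | h
    · simp [Nat.descFactorial_of_lt h]
    · simp [Nat.sub_ne_zero_of_lt h]

lemma eval_taylorPoly_div_pow (c : ℕ → K) (k : ℕ) {x a : K} (ha : a ≠ x) :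
    (taylorPoly c k x).eval a / (a - x) ^ k =
      ∑ r ∈ range (k + 1), c (k - r) * (1 / (a - x) ^ r) := by
  simp only [taylorPoly, eval_finsetSum, eval_mul, eval_C, eval_pow, eval_sub, eval_X]
  rw [← sum_range_reflect, sum_div]
  refine sum_congr rfl fun r hr => ?_
  have hrk : (a - x) ^ k = (a - x) ^ (k - r) * (a - x) ^ r := by
    rw [← pow_add, Nat.sub_add_cancel (mem_range_succ_iff.1 hr)]
  rw [Nat.add_sub_cancel, hrk, mul_comm (c _),
    mul_div_mul_left _ _ (pow_ne_zero _ (sub_ne_zero.2 ha)), mul_one_div]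

variable [DecidableEq ι] {s : Finset ι} {v : ι → K} {x : K}

/-- The Hermite interpolation polynomial of degree at most `#s + k` which takes the values `y i` at
the simple nodes `v i`, `i ∈ s`, and whose `m`-th derivative at the node `x` of multiplicity `k + 1`
is `m! * c m` for `m ≤ k`. It is encoded as a Taylor part plus a Lagrange correction. -/
noncomputable def hermiteInterpolant (c : ℕ → K) (k : ℕ) (x : K) (s : Finset ι) (v y : ι → K) :
    K[X] :=
  taylorPoly c k x + (X - C x) ^ (k + 1) *
    Lagrange.interpolate s v fun i => (y i - (taylorPoly c k x).eval (v i)) / (v i - x) ^ (k + 1)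

lemma natDegree_interpolate_le (hv : Set.InjOn v s) (y : ι → K) :
    (Lagrange.interpolate s v y).natDegree ≤ #s - 1 :=
  natDegree_le_of_degree_le (Lagrange.degree_interpolate_le y hv)

lemma coeff_interpolate_card_sub_one (hv : Set.InjOn v s) (y : ι → K) :
    (Lagrange.interpolate s v y).coeff (#s - 1) = ∑ i ∈ s, Lagrange.nodalWeight s v i * y i := by
  rw [Lagrange.coeff_eq_sum hv (Lagrange.degree_interpolate_lt y hv)]
  refine sum_congr rfl fun i hi => ?_
  rw [Lagrange.eval_interpolate_at_node y hv hi, Lagrange.nodalWeight, prod_inv_distrib,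
    div_eq_inv_mul]

lemma natDegree_hermiteInterpolant_le (c : ℕ → K) (k : ℕ) (x : K) (hv : Set.InjOn v s)
    (y : ι → K) : (hermiteInterpolant c k x s v y).natDegree ≤ #s + k := by
  rcases s.eq_empty_or_nonempty with rfl | hs
  · simpa [hermiteInterpolant] using natDegree_taylorPoly_le c k x
  have hcard := hs.card_pos
  refine natDegree_add_le_of_degree_le ((natDegree_taylorPoly_le c k x).trans (by lia)) ?_
  have hpow := natDegree_pow_le_of_le (k + 1) (natDegree_X_sub_C_le x)
  exact (natDegree_mul_le_of_le hpow (natDegree_interpolate_le hv _)).trans (by lia)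

lemma coeff_hermiteInterpolant (c : ℕ → K) (k : ℕ) (x : K) (hs : s.Nonempty)
    (hv : Set.InjOn v s) (y : ι → K) :
    (hermiteInterpolant c k x s v y).coeff (#s + k) = ∑ i ∈ s, Lagrange.nodalWeight s v i *
      ((y i - (taylorPoly c k x).eval (v i)) / (v i - x) ^ (k + 1)) := by
  have hcard := hs.card_pos
  have hdegree : ((X - C x) ^ (k + 1)).natDegree = k + 1 := by
    rw [natDegree_pow, natDegree_X_sub_C, mul_one]
  have hlead : ((X - C x) ^ (k + 1)).coeff (k + 1) = 1 := by
    simpa only [hdegree] using ((monic_X_sub_C x).pow (k + 1)).coeff_natDegree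
  have htaylor : (taylorPoly c k x).coeff (#s + k) = 0 :=
    coeff_eq_zero_of_natDegree_lt ((natDegree_taylorPoly_le c k x).trans_lt (by lia))
  rw [hermiteInterpolant, coeff_add, htaylor, zero_add,
    show #s + k = (k + 1) + (#s - 1) by lia,
    coeff_mul_add_eq_of_natDegree_le hdegree.le (natDegree_interpolate_le hv _), hlead, one_mul,
    coeff_interpolate_card_sub_one hv]

lemma eval_hermiteInterpolant_at_node (c : ℕ → K) (k : ℕ) (hv : Set.InjOn v s) (y : ι → K) {i : ι}
    (hi : i ∈ s) (hix : v i ≠ x) : (hermiteInterpolant c k x s v y).eval (v i) = y i := by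
  simp only [hermiteInterpolant, eval_add, eval_mul, eval_pow, eval_sub, eval_X, eval_C]
  rw [Lagrange.eval_interpolate_at_node _ hv hi]
  rw [mul_div_cancel₀ _ (pow_ne_zero _ (sub_ne_zero.2 hix)), add_sub_cancel]

lemma eval_iterate_derivative_hermiteInterpolant (c : ℕ → K) {k m : ℕ} (hm : m ≤ k) (x : K)
    (s : Finset ι) (v y : ι → K) :
    (derivative^[m] (hermiteInterpolant c k x s v y)).eval x = m.factorial * c m := by
  have hroot (q : K[X]) : (derivative^[m] ((X - C x) ^ (k + 1) * q)).eval x = 0 := by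
    have hdvd : (X - C x) ^ (k + 1 - m) ∣ derivative^[m] ((X - C x) ^ (k + 1) * q) :=
      pow_sub_dvd_iterate_derivative_of_pow_dvd m (dvd_mul_right _ _)
    exact dvd_iff_isRoot.1 ((dvd_pow_self _ (by lia)).trans hdvd)
  rw [hermiteInterpolant, iterate_map_add, eval_add,
    eval_iterate_derivative_taylorPoly c hm, hroot, add_zero]

/-- Both sides are compared in barycentric form, where `x - v i` cancels one factor of
`(v i - x) ^ (k + 1)`. -/
lemma eval_interpolate_taylorPoly_div_pow (c : ℕ → K) (k : ℕ) (hs : s.Nonempty)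
    (hv : Set.InjOn v s) (hx : ∀ i ∈ s, v i ≠ x) (y : ι → K) :
    (Lagrange.interpolate s v fun i => (taylorPoly c k x).eval (v i) / (v i - x) ^ k).eval x =
      (Lagrange.interpolate s v fun i => y i / (v i - x) ^ k).eval x +
        (hermiteInterpolant c k x s v y).coeff (#s + k) * (Lagrange.nodal s v).eval x := by
  have hx' : ∀ i ∈ s, x ≠ v i := fun i hi => (hx i hi).symm
  rw [Lagrange.eval_interpolate_not_at_node _ hx', Lagrange.eval_interpolate_not_at_node _ hx',
    coeff_hermiteInterpolant c k x hs hv, mul_comm (∑ i ∈ s, _), ← mul_add, ← sum_add_distrib]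
  congr 1
  refine sum_congr rfl fun i hi => ?_
  have hne : v i - x ≠ 0 := sub_ne_zero.2 (hx i hi)
  rw [← neg_sub (v i) x]
  field_simp
  ring

lemma sum_mul_eval_interpolate_one_div_pow (c : ℕ → K) (k : ℕ) (hs : s.Nonempty)
    (hv : Set.InjOn v s) (hx : ∀ i ∈ s, v i ≠ x) (y : ι → K) :
    ∑ r ∈ range (k + 1),
        c (k - r) * (Lagrange.interpolate s v fun i => 1 / (v i - x) ^ r).eval x =
      (Lagrange.interpolate s v fun i => y i / (v i - x) ^ k).eval x +
        (hermiteInterpolant c k x s v y).coeff (#s + k) * (Lagrange.nodal s v).eval x := by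
  rw [← eval_interpolate_taylorPoly_div_pow c k hs hv hx y,
    Lagrange.interpolate_eq_of_values_eq_on _
      (∑ r ∈ range (k + 1), c (k - r) • fun i => 1 / (v i - x) ^ r)]
  · simp only [map_sum, map_smul, eval_finsetSum, eval_smul, smul_eq_mul]
  · intro i hi
    simp only [eval_taylorPoly_div_pow c k (hx i hi), Finset.sum_apply, Pi.smul_apply, smul_eq_mul]

end Hermite

section Rolle

variable {H : Set ℝ}

lemma exists_finset_hasDerivAt_eq_zero (hH : H.OrdConnected) {f f' : ℝ → ℝ}
    (hcont : ContinuousOn f H) (hderiv : ∀ t ∈ interior H, HasDerivAt f (f' t) t)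
    {s : Finset ℝ} (hs : ∀ a ∈ s, a ∈ H ∧ f a = 0) :
    ∃ t : Finset ℝ, Disjoint t s ∧ #s ≤ #t + 1 ∧ ∀ a ∈ t, a ∈ interior H ∧ f' a = 0 := by
  classical
  have rolle : ∀ a ∈ s, ∀ b ∈ s, a < b → ∃ c ∈ Set.Ioo a b, c ∈ interior H ∧ f' c = 0 := by
    intro a ha b hb hab
    have hIcc : Set.Icc a b ⊆ H := hH.out (hs a ha).1 (hs b hb).1
    have hIoo : Set.Ioo a b ⊆ interior H :=
      interior_maximal (Set.Ioo_subset_Icc_self.trans hIcc) isOpen_Ioo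
    obtain ⟨c, hc, hc'⟩ := exists_hasDerivAt_eq_zero hab (hcont.mono hIcc)
      ((hs a ha).2.trans (hs b hb).2.symm) fun t ht => hderiv t (hIoo ht)
    exact ⟨c, hc, hIoo hc, hc'⟩
  choose! c hc using rolle
  let t : Finset ℝ := {z ∈ image₂ c s s | z ∈ interior H ∧ f' z = 0}
  refine ⟨t \ s, sdiff_disjoint, card_le_sdiff_of_interleaved fun a ha b hb hab _ => ?_, ?_⟩
  · obtain ⟨hmem, hzero⟩ := hc a ha b hb hab
    exact ⟨c a b, mem_filter.2 ⟨mem_image₂_of_mem ha hb, hzero⟩, hmem.1, hmem.2⟩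
  · exact fun a ha => (mem_filter.1 (mem_sdiff.1 ha).1).2

lemma exists_iterated_deriv_eq_zero (hH : H.OrdConnected) {d : ℕ} {F : ℕ → ℝ → ℝ}
    (hcont : ∀ m ≤ d, ContinuousOn (F m) H)
    (hderiv : ∀ m ≤ d, ∀ t ∈ interior H, HasDerivAt (F m) (F (m + 1) t) t)
    {s : Finset ℝ} (hs : ∀ a ∈ s, a ∈ H ∧ F 0 a = 0) (hcard : d + 2 ≤ #s) :
    ∃ ξ ∈ interior H, F (d + 1) ξ = 0 := by
  induction d generalizing F s with
  | zero =>
    obtain ⟨t, -, hst, ht⟩ :=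
      exists_finset_hasDerivAt_eq_zero hH (hcont 0 le_rfl) (hderiv 0 le_rfl) hs
    obtain ⟨ξ, hξ⟩ : t.Nonempty := card_pos.1 (by lia)
    exact ⟨ξ, ht ξ hξ⟩
  | succ d ih =>
    obtain ⟨t, -, hst, ht⟩ :=
      exists_finset_hasDerivAt_eq_zero hH (hcont 0 (by lia)) (hderiv 0 (by lia)) hs
    exact ih (F := fun m => F (m + 1)) (fun m hm => hcont _ (by lia))
      (fun m hm => hderiv _ (by lia)) (fun a ha => ⟨interior_subset (ht a ha).1, (ht a ha).2⟩)
      (by lia)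

lemma exists_finset_iterated_deriv_eq_zero_of_multiplicity (hH : H.OrdConnected) {k : ℕ}
    {F : ℕ → ℝ → ℝ} (hcont : ∀ m < k, ContinuousOn (F m) H)
    (hderiv : ∀ m < k, ∀ t ∈ interior H, HasDerivAt (F m) (F (m + 1) t) t)
    {x : ℝ} (hx : x ∈ H) (hFx : ∀ m < k, F m x = 0)
    {s : Finset ℝ} (hxs : x ∉ s) (hs : ∀ a ∈ s, a ∈ H ∧ F 0 a = 0) :
    ∃ t : Finset ℝ, x ∉ t ∧ #s ≤ #t ∧ ∀ a ∈ t, a ∈ H ∧ F k a = 0 := by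
  induction k with
  | zero => exact ⟨s, hxs, le_rfl, hs⟩
  | succ k ih =>
    obtain ⟨t, hxt, hst, ht⟩ := ih (fun m hm => hcont m (by lia)) (fun m hm => hderiv m (by lia))
      fun m hm => hFx m (by lia)
    have hzeros : ∀ a ∈ insert x t, a ∈ H ∧ F k a = 0 :=
      forall_mem_insert _ _ _ |>.2 ⟨⟨hx, hFx k k.lt_succ_self⟩, ht⟩
    obtain ⟨u, hdisj, htu, hu⟩ := exists_finset_hasDerivAt_eq_zero hH (hcont k k.lt_succ_self)
      (hderiv k k.lt_succ_self) hzeros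
    rw [card_insert_of_notMem hxt] at htu
    exact ⟨u, disjoint_right.1 hdisj (mem_insert_self x t), by lia,
      fun a ha => ⟨interior_subset (hu a ha).1, (hu a ha).2⟩⟩

/-- The zero `x` of multiplicity `k + 1` loses one order at each of the first `k` differentiations,
while Rolle's theorem keeps the number of other zeros; after that every step costs one zero. -/
lemma exists_iterated_deriv_eq_zero_of_multiplicity (hH : H.OrdConnected) {n k : ℕ}
    {F : ℕ → ℝ → ℝ} (hcont : ∀ m ≤ n + k, ContinuousOn (F m) H)
    (hderiv : ∀ m ≤ n + k, ∀ t ∈ interior H, HasDerivAt (F m) (F (m + 1) t) t)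
    {x : ℝ} (hx : x ∈ H) (hFx : ∀ m ≤ k, F m x = 0)
    {s : Finset ℝ} (hxs : x ∉ s) (hs : ∀ a ∈ s, a ∈ H ∧ F 0 a = 0) (hcard : n + 1 ≤ #s) :
    ∃ ξ ∈ interior H, F (n + k + 1) ξ = 0 := by
  obtain ⟨t, hxt, hst, ht⟩ := exists_finset_iterated_deriv_eq_zero_of_multiplicity hH
    (fun m hm => hcont m (by lia)) (fun m hm => hderiv m (by lia)) hx
    (fun m (hm : m < k) => hFx m hm.le) hxs hs
  have hzeros : ∀ a ∈ insert x t, a ∈ H ∧ F k a = 0 :=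
    forall_mem_insert _ _ _ |>.2 ⟨⟨hx, hFx k le_rfl⟩, ht⟩
  have hcard' : n + 2 ≤ #(insert x t) := by
    rw [card_insert_of_notMem hxt]
    lia
  obtain ⟨ξ, hξ, hzero⟩ := exists_iterated_deriv_eq_zero hH (F := fun m => F (m + k))
    (fun m hm => hcont _ (by lia))
    (fun m hm => by simpa only [add_right_comm] using hderiv (m + k) (by lia))
    (by simpa only [zero_add] using hzeros) hcard'
  exact ⟨ξ, hξ, by simpa only [add_right_comm] using hzero⟩

end Rolle

section Remainder

lemma eval_iterate_derivative_of_natDegree_le {R : Type*} [CommSemiring R] {P : R[X]} {N : ℕ}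
    (hP : P.natDegree ≤ N) (t : R) :
    (derivative^[N] P).eval t = N.factorial * P.coeff N := by
  have hconst : (derivative^[N] P).natDegree ≤ 0 :=
    (natDegree_iterate_derivative P N).trans (by lia)
  rw [eq_C_of_natDegree_le_zero hconst, eval_C, coeff_iterate_derivative, zero_add,
    Nat.descFactorial_self, nsmul_eq_mul]

lemma hasDerivAt_iteratedDerivWithin {D : Set ℝ} {f : ℝ → ℝ} {m : ℕ} {t : ℝ}
    (ht : t ∈ interior D) (hf : DifferentiableWithinAt ℝ (iteratedDerivWithin m f D) D t) :
    HasDerivAt (iteratedDerivWithin m f D) (iteratedDerivWithin (m + 1) f D t) t := by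
  rw [iteratedDerivWithin_succ]
  exact hf.hasDerivWithinAt.hasDerivAt (mem_interior_iff_mem_nhds.1 ht)

variable {D H : Set ℝ} {f : ℝ → ℝ} {n k : ℕ} {x : ℝ}

lemma exists_iteratedDerivWithin_eq_factorial_mul_coeff_s5 (hD : UniqueDiffOn ℝ D)
    (hH : H.OrdConnected) (hHD : H ⊆ D) (hf : ContDiffOn ℝ (n + k : ℕ) f D)
    (hf' : DifferentiableOn ℝ (iteratedDerivWithin (n + k) f D) (interior D))
    {P : ℝ[X]} (hP : P.natDegree ≤ n + k + 1) (hx : x ∈ H)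
    (hPx : ∀ m ≤ k, (derivative^[m] P).eval x = iteratedDerivWithin m f D x)
    {s : Finset ℝ} (hxs : x ∉ s) (hs : ∀ a ∈ s, a ∈ H ∧ P.eval a = f a) (hcard : n + 1 ≤ #s) :
    ∃ ξ ∈ interior H,
      iteratedDerivWithin (n + k + 1) f D ξ = (n + k + 1).factorial * P.coeff (n + k + 1) := by
  have hdiff : ∀ m ≤ n + k, ∀ t ∈ interior D,
      DifferentiableWithinAt ℝ (iteratedDerivWithin m f D) D t := by
    intro m hm t ht
    rcases hm.lt_or_eq with hlt | rfl
    · exact hf.differentiableOn_iteratedDerivWithin (mod_cast hlt) hD t (interior_subset ht)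
    · exact (hf'.differentiableAt (isOpen_interior.mem_nhds ht)).differentiableWithinAt
  obtain ⟨ξ, hξ, hzero⟩ := exists_iterated_deriv_eq_zero_of_multiplicity hH
    (F := fun m t => iteratedDerivWithin m f D t - (derivative^[m] P).eval t)
    (fun m hm => ((hf.continuousOn_iteratedDerivWithin (mod_cast hm) hD).mono hHD).sub
      (derivative^[m] P).continuousOn)
    (fun m hm t ht => by
      have ht' := interior_mono hHD ht
      rw [Function.iterate_succ_apply']
      exact (hasDerivAt_iteratedDerivWithin ht' (hdiff m hm t ht')).sub
        ((derivative^[m] P).hasDerivAt t))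
    hx (fun m hm => sub_eq_zero.2 (hPx m hm).symm) hxs
    (fun a ha => ⟨(hs a ha).1, by simp [(hs a ha).2]⟩) hcard
  exact ⟨ξ, hξ, (sub_eq_zero.1 hzero).trans (eval_iterate_derivative_of_natDegree_le hP ξ)⟩

lemma exists_coeff_hermiteInterpolant_eq {ι : Type*} [DecidableEq ι] (hD : UniqueDiffOn ℝ D)
    (hH : H.OrdConnected) (hHD : H ⊆ D) (hf : ContDiffOn ℝ (n + k : ℕ) f D)
    (hf' : DifferentiableOn ℝ (iteratedDerivWithin (n + k) f D) (interior D)) (hx : x ∈ H)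
    {s : Finset ι} {v : ι → ℝ} (hcard : #s = n + 1) (hv : Set.InjOn v s)
    (hvH : ∀ i ∈ s, v i ∈ H) (hvx : ∀ i ∈ s, v i ≠ x) :
    ∃ ξ ∈ interior H,
      (hermiteInterpolant (fun m => iteratedDerivWithin m f D x / m.factorial) k x s v
          fun i => f (v i)).coeff (#s + k) =
        iteratedDerivWithin (n + k + 1) f D ξ / (n + k + 1).factorial := by
  have hdegree : #s + k = n + k + 1 := by lia
  obtain ⟨ξ, hξ, hcoeff⟩ := exists_iteratedDerivWithin_eq_factorial_mul_coeff_s5 hD hH hHD hf hf'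
    ((natDegree_hermiteInterpolant_le _ k x hv _).trans hdegree.le) hx
    (fun m hm => by
      rw [eval_iterate_derivative_hermiteInterpolant _ hm]
      exact mul_div_cancel₀ _ (Nat.cast_ne_zero.2 m.factorial_ne_zero))
    (s := s.image v) (by simpa only [mem_image, not_exists, not_and] using hvx)
    (forall_mem_image.2 fun i hi =>
      ⟨hvH i hi, eval_hermiteInterpolant_at_node _ k hv (fun i => f (v i)) hi (hvx i hi)⟩)
    (by rw [card_image_of_injOn hv, hcard])
  refine ⟨ξ, hξ, ?_⟩
  rw [hdegree, hcoeff, mul_div_cancel_left₀ _ (Nat.cast_ne_zero.2 (Nat.factorial_ne_zero _))]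

lemma exists_sum_mul_eval_interpolate_eq {ι : Type*} [DecidableEq ι] (hD : Convex ℝ D)
    (hf : ContDiffOn ℝ (n + k : ℕ) f D)
    (hf' : DifferentiableOn ℝ (iteratedDerivWithin (n + k) f D) (interior D)) (hx : x ∈ D)
    {s : Finset ι} {v : ι → ℝ} (hcard : #s = n + 1) (hv : Set.InjOn v s)
    (hvD : ∀ i ∈ s, v i ∈ D) (hvx : ∀ i ∈ s, v i ≠ x) :
    ∃ ξ ∈ interior (convexHull ℝ (insert x (v '' s))),
      ∑ r ∈ range (k + 1), iteratedDerivWithin (k - r) f D x / (k - r).factorial *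
          (Lagrange.interpolate s v fun i => 1 / (v i - x) ^ r).eval x =
        (Lagrange.interpolate s v fun i => f (v i) / (v i - x) ^ k).eval x +
          iteratedDerivWithin (n + k + 1) f D ξ / (n + k + 1).factorial * ∏ i ∈ s, (x - v i) := by
  have hs : s.Nonempty := card_pos.1 (by lia)
  have hDunique : UniqueDiffOn ℝ D := by
    obtain ⟨i, hi⟩ := hs
    have hnontrivial : D.Nontrivial := ⟨v i, hvD i hi, x, hx, hvx i hi⟩
    exact uniqueDiffOn_convex hD (hD.nontrivial_iff_nonempty_interior.1 hnontrivial)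
  have hnodes : insert x (v '' s) ⊆ convexHull ℝ (insert x (v '' s)) := subset_convexHull ℝ _
  have hsubset : convexHull ℝ (insert x (v '' s)) ⊆ D :=
    convexHull_min (Set.insert_subset hx (Set.image_subset_iff.2 hvD)) hD
  obtain ⟨ξ, hξ, hcoeff⟩ := exists_coeff_hermiteInterpolant_eq hDunique
    (convex_convexHull ℝ _).ordConnected hsubset hf hf' (hnodes (Set.mem_insert _ _)) hcard hv
    (fun i hi => hnodes (Set.mem_insert_of_mem _ (Set.mem_image_of_mem v hi))) hvx
  refine ⟨ξ, hξ, ?_⟩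
  rw [← hcoeff, ← Lagrange.eval_nodal]
  exact sum_mul_eval_interpolate_one_div_pow
    (fun m => iteratedDerivWithin m f D x / m.factorial) k hs hv hvx fun i => f (v i)

end Remainder

theorem stmt_5_general {D : Set ℝ} (hD : Convex ℝ D) {n k : ℕ} (hn : 1 ≤ n) {f : ℝ → ℝ}
    (hf : ContDiffOn ℝ (n + k : ℕ) f D)
    (hf' : DifferentiableOn ℝ (iteratedDerivWithin (n + k) f D) (interior D))
    {x : ℝ} {X : ℕ → ℝ} (hx : x ∈ D) (hX : ∀ i ≤ n, X i ∈ D) (hxX : ∀ i ≤ n, X i ≠ x)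
    (hXX : ∀ i j, i ≤ n → j ≤ n → i ≠ j → X i ≠ X j) :
    ∃ ξ ∈ interior (convexHull ℝ (insert x (X '' Set.Iic n))),
      (∑ r ∈ Finset.range (k + 1),
          iteratedDerivWithin (k - r) f D x / (Nat.factorial (k - r) : ℝ)
            * aitken X x (fun j => 1 / (X j - x) ^ r) 0 (n - 1) n)
        = aitken X x (fun j => f (X j) / (X j - x) ^ k) 0 (n - 1) n
          + iteratedDerivWithin (n + k + 1) f D ξ / (Nat.factorial (n + k + 1) : ℝ)
            * ∏ i ∈ Finset.range (n + 1), (x - X i) := by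
  have hle {i : ℕ} (hi : i ∈ range (n + 1)) : i ≤ n := mem_range_succ_iff.1 hi
  have hinj : Set.InjOn X (range (n + 1)) := fun i hi j hj hij =>
    by_contra fun hne => hXX i j (hle hi) (hle hj) hne hij
  have hnodes : insert n (Icc 0 (n - 1)) = range (n + 1) := by grind
  have hIic : Set.Iic n = (range (n + 1) : Finset ℕ) := Set.ext fun _ => mem_range_succ_iff.symm
  have haitken (g : ℕ → ℝ) :
      aitken X x g 0 (n - 1) n = (Lagrange.interpolate (range (n + 1)) X g).eval x := by
    rw [aitken_eq_eval_interpolate x g (Nat.zero_le _) (by lia) (hnodes ▸ hinj), hnodes]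
  simp only [haitken, hIic]
  exact exists_sum_mul_eval_interpolate_eq hD hf hf' hx (card_range _) hinj
    (fun i hi => hX i (hle hi)) fun i hi => hxX i (hle hi)

theorem stmt_5 (p q : ℝ) (hpq : p < q) (n k : ℕ) (hn : 1 ≤ n)
    (f : ℝ → ℝ) (hf : ContDiffOn ℝ (n + k + 1 : ℕ) f (Set.Icc p q))
    (x : ℝ) (X : ℕ → ℝ)
    (hx : x ∈ Set.Icc p q) (hX : ∀ i ≤ n, X i ∈ Set.Icc p q)
    (hxX : ∀ i ≤ n, X i ≠ x)
    (hXX : ∀ i j, i ≤ n → j ≤ n → i ≠ j → X i ≠ X j) :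
    ∃ ξ ∈ convexHull ℝ (insert x (X '' Set.Iic n)),
      (∑ r ∈ Finset.range (k + 1),
          iteratedDerivWithin (k - r) f (Set.Icc p q) x / (Nat.factorial (k - r) : ℝ)
            * aitken X x (fun j => 1 / (X j - x) ^ r) 0 (n - 1) n)
        = aitken X x (fun j => f (X j) / (X j - x) ^ k) 0 (n - 1) n
          + iteratedDerivWithin (n + k + 1) f (Set.Icc p q) ξ / (Nat.factorial (n + k + 1) : ℝ)
            * ∏ i ∈ Finset.range (n + 1), (x - X i) := by
  have hf' := hf.differentiableOn_iteratedDerivWithin (mod_cast (n + k).lt_succ_self)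
    (uniqueDiffOn_Icc hpq)
  obtain ⟨ξ, hξ, h⟩ := stmt_5_general (convex_Icc p q) hn (hf.of_le (mod_cast (n + k).le_succ))
    (hf'.mono interior_subset) hx hX hxX hXX
  exact ⟨ξ, interior_subset hξ, h⟩
end
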